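/- arXiv:1607.05850 — 3 statements merged into one kernel-verified Lean document; each statement's English description precedes it below -/
import Mathlib

section
/- Let Γ = ((V,E),(V₁,V₂)) be a game graph with GR(1) objective given by target sets L₁,…,L_{k₁} and U₁,…,U_{k₂}. Suppose that for every ℓ ∈ {1,…,k₂}, every vertex of V ∖ Attr₁(Γ,U_ℓ) is winning for player 1 in the game on the induced game graph Γ[V ∖ Attr₁(Γ,U_ℓ)] with the disjunctive co-Büchi objective ⋁_{t=1}^{k₁} coBüchi(L_t). Then every vertex of V is winning for player 1 in the game on Γ with the GR(1) objective. -/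
open Classical

universe u

/-- A game graph: a directed graph `E` on vertex set `V` together with the set
`P1` of player-1 vertices; player-2 vertices are the complement of `P1`. -/
structure GameGraph (V : Type u) where
  E : V → V → Prop
  P1 : Set V

/-- The two players. -/
inductive Player : Type where
  | one : Player
  | two : Player

/-- The opponent of a player. -/
def Player.opp : Player → Player
  | .one => .two
  | .two => .one

/-- Select the first argument for player 1 and the second for player 2. -/
def Player.sel {α : Sort*} : Player → α → α → α
  | .one, a, _ => a
  | .two, _, b => b

variable {V : Type u}

/-- The vertices belonging to a player. -/
def GameGraph.verts (Γ : GameGraph V) : Player → Set V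
  | .one => Γ.P1
  | .two => Γ.P1ᶜ

/-- Every vertex has at least one outgoing edge. -/
def GameGraph.NoDead (Γ : GameGraph V) : Prop := ∀ v, ∃ w, Γ.E v w

/-- A (general, history-dependent) strategy: given the history of the play so far
(the vertices visited strictly before the current one) and the current vertex,
choose a next vertex. -/
abbrev Strat (V : Type u) : Type u := List V → V → V

/-- A strategy is memoryless if it depends only on the current vertex. -/
def Memoryless (σ : Strat V) : Prop := ∀ h h' v, σ h v = σ h' v

/-- A strategy is valid for player `p` if at every vertex of player `p` it
chooses a successor of that vertex. -/
def GameGraph.ValidFor (Γ : GameGraph V) (p : Player) (σ : Strat V) : Prop :=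
  ∀ hist v, v ∈ Γ.verts p → Γ.E v (σ hist v)

/-- One step of the play: the player-1 strategy moves at `P1`-vertices, the
player-2 strategy elsewhere. -/
noncomputable def GameGraph.step (Γ : GameGraph V) (σ π : Strat V)
    (hist : List V) (v : V) : V :=
  if v ∈ Γ.P1 then σ hist v else π hist v

/-- The play determined by a start vertex `v`, a player-1 strategy `σ` and a
player-2 strategy `π`, together with its history. -/
noncomputable def GameGraph.playAux (Γ : GameGraph V) (σ π : Strat V) (v : V) :
    ℕ → List V × V
  | 0 => ([], v)
  | n + 1 =>
      let q := Γ.playAux σ π v n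
      (q.1 ++ [q.2], Γ.step σ π q.1 q.2)

/-- The play determined by a start vertex `v`, a player-1 strategy `σ` and a
player-2 strategy `π`. -/
noncomputable def GameGraph.play (Γ : GameGraph V) (σ π : Strat V) (v : V)
    (n : ℕ) : V :=
  (Γ.playAux σ π v n).2

/-- The play from `v` where player `p` uses strategy `σ` and the opponent uses
strategy `τ`. -/
noncomputable def GameGraph.winPlay (Γ : GameGraph V) (p : Player)
    (σ τ : Strat V) (v : V) : ℕ → V :=
  Γ.play (p.sel σ τ) (p.sel τ σ) v

/-- Player `p` wins from `v` for objective `Ω`: player 1 wants the resulting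
play to lie in `Ω`, player 2 wants it to lie outside `Ω`. -/
def GameGraph.Wins (Γ : GameGraph V) (p : Player) (Ω : Set (ℕ → V)) (v : V) :
    Prop :=
  ∃ σ, Γ.ValidFor p σ ∧ ∀ τ, Γ.ValidFor p.opp τ →
    p.sel (Γ.winPlay p σ τ v ∈ Ω) (Γ.winPlay p σ τ v ∉ Ω)

/-- A player-`p` dominion for objective `Ω`: a nonempty set from each of whose
vertices player `p` has a winning strategy that moreover keeps the play inside
the set. -/
def GameGraph.Dominion (Γ : GameGraph V) (p : Player) (Ω : Set (ℕ → V))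
    (D : Set V) : Prop :=
  D.Nonempty ∧ ∀ v ∈ D, ∃ σ, Γ.ValidFor p σ ∧ ∀ τ, Γ.ValidFor p.opp τ →
    (p.sel (Γ.winPlay p σ τ v ∈ Ω) (Γ.winPlay p σ τ v ∉ Ω)) ∧
    ∀ n, Γ.winPlay p σ τ v n ∈ D

/-- The player-`p` attractor of `U`: the least set containing `U`, every
player-`p` vertex with some successor in it, and every opponent vertex all of
whose successors are in it. -/
inductive GameGraph.Attr (Γ : GameGraph V) (p : Player) (U : Set V) : V → Prop
  | base {v} : v ∈ U → GameGraph.Attr Γ p U v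
  | own {v w} : v ∈ Γ.verts p → Γ.E v w → GameGraph.Attr Γ p U w →
      GameGraph.Attr Γ p U v
  | opp {v} : v ∈ Γ.verts p.opp → (∀ w, Γ.E v w → GameGraph.Attr Γ p U w) →
      GameGraph.Attr Γ p U v

/-- The player-`p` attractor, as a set. -/
def GameGraph.attr (Γ : GameGraph V) (p : Player) (U : Set V) : Set V :=
  {v | Γ.Attr p U v}

/-- The iterative construction `R_j` of the player-`p` attractor. -/
def GameGraph.attrIter (Γ : GameGraph V) (p : Player) (U : Set V) : ℕ → Set V
  | 0 => U
  | n + 1 =>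
      Γ.attrIter p U n
        ∪ {v | v ∈ Γ.verts p ∧ ∃ w, Γ.E v w ∧ w ∈ Γ.attrIter p U n}
        ∪ {v | v ∈ Γ.verts p.opp ∧ ∀ w, Γ.E v w → w ∈ Γ.attrIter p U n}

/-- The `p`-rank of `v` with respect to `U`: the least `j` with `v ∈ R_j`, and
`∞` if there is no such `j`. -/
noncomputable def GameGraph.rank (Γ : GameGraph V) (p : Player) (U : Set V)
    (v : V) : ℕ∞ :=
  ⨅ n ∈ {n : ℕ | v ∈ Γ.attrIter p U n}, (n : ℕ∞)

/-- A set `U` is `p`-closed: every player-`p` vertex of `U` has all its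
successors in `U`, and every opponent vertex of `U` has some successor in `U`. -/
def GameGraph.PClosed (Γ : GameGraph V) (p : Player) (U : Set V) : Prop :=
  ∀ v ∈ U, (v ∈ Γ.verts p → ∀ w, Γ.E v w → w ∈ U) ∧
    (v ∈ Γ.verts p.opp → ∃ w, Γ.E v w ∧ w ∈ U)

/-- The induced game graph on a subset `U` of the vertices. -/
def GameGraph.sub (Γ : GameGraph V) (U : Set V) : GameGraph U where
  E a b := Γ.E (a : V) (b : V)
  P1 := {a : U | (a : V) ∈ Γ.P1}

/-- The game graph with the roles of the two players exchanged. -/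
def GameGraph.swap (Γ : GameGraph V) : GameGraph V where
  E := Γ.E
  P1 := Γ.P1ᶜ

/-- The set of vertices occurring infinitely often in a play. -/
def InfOcc (ω : ℕ → V) : Set V := {v | ∀ n, ∃ m, n ≤ m ∧ ω m = v}

/-- An objective is prefix-independent if membership of a play depends only on
the set of vertices visited infinitely often. -/
def PrefixIndep (Ω : Set (ℕ → V)) : Prop :=
  ∀ ω ω', InfOcc ω = InfOcc ω' → (ω ∈ Ω ↔ ω' ∈ Ω)

/-- The Büchi objective with target set `T`. -/
def BuchiObj (T : Set V) : Set (ℕ → V) := {ω | (InfOcc ω ∩ T).Nonempty}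

/-- The generalized Büchi objective with target sets `T i`. -/
def GenBuchiObj {ι : Sort*} (T : ι → Set V) : Set (ℕ → V) :=
  {ω | ∀ i, (InfOcc ω ∩ T i).Nonempty}

/-- The disjunctive co-Büchi objective with target sets `T i`. -/
def DisjCoBuchiObj {ι : Sort*} (T : ι → Set V) : Set (ℕ → V) :=
  {ω | ∃ i, InfOcc ω ∩ T i = ∅}

/-- The GR(1) objective with assumption sets `L t` and guarantee sets `U ℓ`. -/
def GR1Obj {ι₁ ι₂ : Sort*} (L : ι₁ → Set V) (U : ι₂ → Set V) : Set (ℕ → V) :=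
  {ω | (∀ t, (InfOcc ω ∩ L t).Nonempty) → ∀ ℓ, (InfOcc ω ∩ U ℓ).Nonempty}

/-- An objective on the full vertex set, restricted to plays of the induced
game graph on `U`. -/
def subObj (U : Set V) (Ω : Set (ℕ → V)) : Set (ℕ → ↥U) :=
  {ω | (fun n => (ω n : V)) ∈ Ω}

/-- The out-degree of a vertex. -/
noncomputable def GameGraph.outDeg (Γ : GameGraph V) (v : V) : ℕ :=
  {w | Γ.E v w}.ncard

/-- A hierarchical graph decomposition of a game graph `Γ`: for every vertex
`v`, `idx v` enumerates the incoming edges of `v` (i.e., their sources) by the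
positions `0, …, indeg(v) − 1`, listing edges from player-2 vertices first. -/
structure HierDecomp (Γ : GameGraph V) where
  idx : V → V → ℕ
  idx_inj : ∀ v u u', Γ.E u v → Γ.E u' v → idx v u = idx v u' → u = u'
  idx_lt : ∀ v u, Γ.E u v → idx v u < {u' | Γ.E u' v}.ncard
  p2_first : ∀ v u u', Γ.E u v → Γ.E u' v → u ∉ Γ.P1 → u' ∈ Γ.P1 →
      idx v u < idx v u'

/-- The `i`-th level `Γ_i = (G_i, (V₁,V₂))` of the hierarchical graph
decomposition: `G_i` keeps all outgoing edges of vertices of out-degree at most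
`2^i`, and the first `2^i` incoming edges of every vertex. -/
def HierDecomp.graph {Γ : GameGraph V} (H : HierDecomp Γ) (i : ℕ) :
    GameGraph V where
  E u v := Γ.E u v ∧ (Γ.outDeg u ≤ 2 ^ i ∨ H.idx v u < 2 ^ i)
  P1 := Γ.P1

/-- The exception set `Z_i`: player-2 vertices with no outgoing edge in `G_i`
together with player-1 vertices with more than `2^i` outgoing edges in `G`. -/
def HierDecomp.Z {Γ : GameGraph V} (H : HierDecomp Γ) (i : ℕ) : Set V :=
  {v | v ∉ Γ.P1 ∧ ¬ ∃ w, (H.graph i).E v w} ∪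
    {v | v ∈ Γ.P1 ∧ 2 ^ i < Γ.outDeg v}

/-- Cyclic successor `ℓ ⊕ 1` on `Fin k`. -/
def finSucc {k : ℕ} (ℓ : Fin k) : Fin k :=
  ⟨(ℓ.val + 1) % k, Nat.mod_lt _ (Nat.lt_of_le_of_lt (Nat.zero_le _) ℓ.isLt)⟩

/-- The bound `n̄ = min (h − 1) |V ∖ T|` of the progress measure. -/
noncomputable def nbar (h : ℕ) (T : Set V) : ℕ := min (h - 1) Tᶜ.ncard

/-- The value of the best successor of `v` for the player owning `v`. -/
noncomputable def GameGraph.best (Γ : GameGraph V) {k : ℕ} (T : Fin k → Set V)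
    (ρ : Fin k → V → ℕ∞) (ℓ : Fin k) (v : V) : ℕ∞ :=
  let ℓ' := if v ∈ T ℓ then finSucc ℓ else ℓ
  if v ∈ Γ.P1 then ⨅ w ∈ {w | Γ.E v w}, ρ ℓ' w
  else ⨆ w ∈ {w | Γ.E v w}, ρ ℓ' w

/-- The increment operation `incr` of the progress measure (for the pair
`(v, ℓ)`). -/
noncomputable def pmIncr (h : ℕ) {k : ℕ} (T : Fin k → Set V) (ℓ : Fin k)
    (v : V) (x : ℕ∞) : ℕ∞ :=
  if v ∈ T ℓ ∧ x ≠ ⊤ then 0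
  else if x < (nbar h (T ℓ) : ℕ∞) then x + 1 else ⊤

/-- The update operator of the progress measure: update `ρ ℓ v` to
`max (ρ ℓ v) (incr (best v))`. -/
noncomputable def GameGraph.pmStep (Γ : GameGraph V) (h : ℕ) {k : ℕ}
    (T : Fin k → Set V) (ρ : Fin k → V → ℕ∞) : Fin k → V → ℕ∞ :=
  fun ℓ v => max (ρ ℓ v) (pmIncr h T ℓ v (Γ.best T ρ ℓ v))

/-- `ρ` is the progress measure associated with `Γ`, `T` and `h`: the least
fixed point (starting from the all-zero functions, i.e., the least one) of the
update operator. -/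
def GameGraph.IsProgressMeasure (Γ : GameGraph V) (h : ℕ) {k : ℕ}
    (T : Fin k → Set V) (ρ : Fin k → V → ℕ∞) : Prop :=
  Γ.pmStep h T ρ = ρ ∧ ∀ ρ', Γ.pmStep h T ρ' = ρ' → ∀ ℓ v, ρ ℓ v ≤ ρ' ℓ v

/-- Player `p` can force, from `v`, that the play stays in `D` forever and
visits every target set `T i` infinitely often. -/
def GameGraph.ForcesStayBuchi (Γ : GameGraph V) (p : Player) (D : Set V)
    {ι : Sort*} (T : ι → Set V) (v : V) : Prop :=
  ∃ σ, Γ.ValidFor p σ ∧ ∀ τ, Γ.ValidFor p.opp τ →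
    (∀ n, Γ.winPlay p σ τ v n ∈ D) ∧
    ∀ i n, ∃ m, n ≤ m ∧ Γ.winPlay p σ τ v m ∈ T i

/-!
Fix one guarantee set `U`. From its attractor player 1 reaches `U` by decreasing ordinal ranks, and
on the complement she follows a strategy that wins the disjunctive co-Büchi game there; a play that
never enters the attractor is a play of the subgame. So she has a single strategy all of whose plays
visit `U` or satisfy the co-Büchi objective.

These strategies are played one after the other, each guarantee set being scheduled infinitely
often; a strategy is abandoned, and the history forgotten, once its set has been visited. Either
every phase ends, and all guarantees are met, or some tail of the play satisfies the co-Büchi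
objective and an assumption fails.
-/

open Filter

section Attractor

namespace GameGraph

variable {Γ : GameGraph V} {p : Player} {U : Set V} {v w : V}

theorem verts_opp (Γ : GameGraph V) (p : Player) : Γ.verts p.opp = (Γ.verts p)ᶜ := by
  cases p <;> simp [verts, Player.opp]

theorem mem_verts_or_mem_verts_opp (Γ : GameGraph V) (p : Player) (v : V) :
    v ∈ Γ.verts p ∨ v ∈ Γ.verts p.opp := by
  rw [verts_opp]
  exact Classical.em _

theorem PClosed.noDead_sub {W : Set V} (hW : Γ.PClosed p W) (hΓ : Γ.NoDead) :
    (Γ.sub W).NoDead := by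
  rintro ⟨v, hv⟩
  rcases Γ.mem_verts_or_mem_verts_opp p v with hp | hp
  · obtain ⟨w, hvw⟩ := hΓ v
    exact ⟨⟨w, (hW v hv).1 hp w hvw⟩, hvw⟩
  · obtain ⟨w, hvw, hw⟩ := (hW v hv).2 hp
    exact ⟨⟨w, hw⟩, hvw⟩

theorem pClosed_compl_attr (Γ : GameGraph V) (p : Player) (U : Set V) :
    Γ.PClosed p (Γ.attr p U)ᶜ := by
  refine fun v hv => ⟨fun hp w hvw hw => hv (.own hp hvw hw), fun hp => ?_⟩
  by_contra! h
  exact hv (.opp hp fun w hvw => not_not.1 (h w hvw))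

/-- `Γ.AttrStage p U o v`: the vertex `v` belongs to the player-`p` attractor of `U` by stage `o` of
its transfinite construction. The stages `attrIter` do not suffice at infinite out-degree. -/
inductive AttrStage (Γ : GameGraph V) (p : Player) (U : Set V) : Ordinal.{u} → V → Prop
  | base {o v} : v ∈ U → AttrStage Γ p U o v
  | own {o o' v w} : v ∈ Γ.verts p → Γ.E v w → o' < o → AttrStage Γ p U o' w →
      AttrStage Γ p U o v
  | opp {o v} (r : V → Ordinal.{u}) : v ∈ Γ.verts p.opp → (∀ w, Γ.E v w → r w < o) →
      (∀ w, Γ.E v w → AttrStage Γ p U (r w) w) → AttrStage Γ p U o v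

theorem AttrStage.mem_attr {o : Ordinal.{u}} (h : Γ.AttrStage p U o v) : v ∈ Γ.attr p U := by
  induction h with
  | base hv => exact .base hv
  | own hv hvw _ _ ih => exact .own hv hvw ih
  | opp _ hv _ _ ih => exact .opp hv ih

theorem exists_attrStage (h : v ∈ Γ.attr p U) : ∃ o, Γ.AttrStage p U o v := by
  induction h with
  | base hv => exact ⟨0, .base hv⟩
  | own hv hvw _ ih =>
    obtain ⟨o, ho⟩ := ih
    exact ⟨Order.succ o, .own hv hvw (Order.lt_succ o) ho⟩
  | opp hv _ ih =>
    choose! r hr using ih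
    exact ⟨⨆ w, r w + 1, .opp r hv (fun w _ => Ordinal.lt_iSup_add_one r w) hr⟩

/-- The least stage at which `v` enters the player-`p` attractor of `U`; it is `0` for vertices
outside the attractor. -/
noncomputable def attrRank (Γ : GameGraph V) (p : Player) (U : Set V) (v : V) : Ordinal.{u} :=
  sInf {o | Γ.AttrStage p U o v}

theorem AttrStage.attrRank_le {o : Ordinal.{u}} (h : Γ.AttrStage p U o v) :
    Γ.attrRank p U v ≤ o :=
  csInf_le' h

theorem attrStage_attrRank (h : v ∈ Γ.attr p U) : Γ.AttrStage p U (Γ.attrRank p U v) v :=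
  csInf_mem (exists_attrStage h)

theorem exists_attrRank_lt (hv : v ∈ Γ.attr p U) (hU : v ∉ U) (hp : v ∈ Γ.verts p) :
    ∃ w, Γ.E v w ∧ w ∈ Γ.attr p U ∧ Γ.attrRank p U w < Γ.attrRank p U v := by
  cases attrStage_attrRank hv with
  | base h => exact absurd h hU
  | own _ hvw hlt hw => exact ⟨_, hvw, hw.mem_attr, hw.attrRank_le.trans_lt hlt⟩
  | opp _ h => exact absurd hp ((Γ.verts_opp p).subset h)

theorem attrRank_lt_of_edge (hv : v ∈ Γ.attr p U) (hU : v ∉ U) (hp : v ∈ Γ.verts p.opp)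
    (hvw : Γ.E v w) : w ∈ Γ.attr p U ∧ Γ.attrRank p U w < Γ.attrRank p U v := by
  cases attrStage_attrRank hv with
  | base h => exact absurd h hU
  | own h => exact absurd h ((Γ.verts_opp p).subset hp)
  | opp _ _ hlt hw => exact ⟨(hw w hvw).mem_attr, (hw w hvw).attrRank_le.trans_lt (hlt w hvw)⟩

theorem NoDead.exists_attr_strategy (hΓ : Γ.NoDead) (p : Player) (U : Set V) :
    ∃ f : V → V, (∀ v, Γ.E v (f v)) ∧ ∀ ω : ℕ → V,
      (∀ n, ω n ∈ Γ.verts p → ω n ∈ Γ.attr p U → ω (n + 1) = f (ω n)) →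
      (∀ n, ω n ∈ Γ.verts p.opp → Γ.E (ω n) (ω (n + 1))) →
      (∃ n, ω n ∈ Γ.attr p U) → ∃ n, ω n ∈ U := by
  have hsucc (v : V) : ∃ w, Γ.E v w ∧ (v ∈ Γ.attr p U → v ∉ U → v ∈ Γ.verts p →
      w ∈ Γ.attr p U ∧ Γ.attrRank p U w < Γ.attrRank p U v) := by
    by_cases h : v ∈ Γ.attr p U ∧ v ∉ U ∧ v ∈ Γ.verts p
    · obtain ⟨w, hvw, hw⟩ := exists_attrRank_lt h.1 h.2.1 h.2.2
      exact ⟨w, hvw, fun _ _ _ => hw⟩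
    · obtain ⟨w, hvw⟩ := hΓ v
      exact ⟨w, hvw, fun hv hU hp => absurd ⟨hv, hU, hp⟩ h⟩
  choose f hf hf_lt using hsucc
  refine ⟨f, hf, fun ω hown hopp ⟨n, hn⟩ => ?_⟩
  by_contra! hU
  have hdescent (n : ℕ) (hn : ω n ∈ Γ.attr p U) : ω (n + 1) ∈ Γ.attr p U ∧
      Γ.attrRank p U (ω (n + 1)) < Γ.attrRank p U (ω n) := by
    rcases Γ.mem_verts_or_mem_verts_opp p (ω n) with hp | hp
    · exact hown n hp hn ▸ hf_lt _ hn (hU n) hp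
    · exact attrRank_lt_of_edge hn (hU n) hp (hopp n hp)
  have hattr (k : ℕ) : ω (n + k) ∈ Γ.attr p U := by
    induction k with
    | zero => exact hn
    | succ k ih => exact (hdescent _ ih).1
  exact not_strictAnti_of_wellFoundedLT (fun k => Γ.attrRank p U (ω (n + k)))
    (strictAnti_nat_of_succ_lt fun k => (hdescent _ (hattr k)).2)

end GameGraph

end Attractor

section Plays

/-- The vertices `ω 0, …, ω (n - 1)` visited strictly before time `n`. -/
def history (ω : ℕ → V) (n : ℕ) : List V := (List.range n).map ω

theorem history_succ (ω : ℕ → V) (n : ℕ) : history ω (n + 1) = history ω n ++ [ω n] := by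
  simp [history, List.range_succ]

theorem history_add (ω : ℕ → V) (m n : ℕ) :
    history ω (m + n) = history ω m ++ history (fun k => ω (m + k)) n := by
  simp [history, List.range_add, Function.comp_def]

theorem headD_history (ω : ℕ → V) (n : ℕ) : (history ω n).headD (ω n) = ω 0 := by
  cases n <;> simp [history, List.range_succ_eq_map]

theorem filterMap_partialInv_map {α β : Type*} {f : α → β} (hf : f.Injective) (l : List α) :
    (l.map f).filterMap (Function.partialInv f) = l := by
  simp [List.filterMap_map, Function.partialInv_left hf]

namespace GameGraph

variable {Γ : GameGraph V} {σ τ : Strat V} {ω : ℕ → V}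

/-- The sequence `ω` is a play of `Γ` in which player 1 uses `σ`, while player 2 moves along
arbitrary edges. This describes the outcomes of `σ` without mentioning player-2 strategies. -/
structure Follows (Γ : GameGraph V) (σ : Strat V) (ω : ℕ → V) : Prop where
  move : ∀ n, ω n ∈ Γ.P1 → ω (n + 1) = σ (history ω n) (ω n)
  edge : ∀ n, ω n ∉ Γ.P1 → Γ.E (ω n) (ω (n + 1))

theorem fst_playAux (Γ : GameGraph V) (σ τ : Strat V) (v : V) (n : ℕ) :
    (Γ.playAux σ τ v n).1 = history (Γ.play σ τ v) n := by
  induction n with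
  | zero => rfl
  | succ n ih => rw [history_succ, ← ih]; rfl

theorem play_succ (Γ : GameGraph V) (σ τ : Strat V) (v : V) (n : ℕ) :
    Γ.play σ τ v (n + 1) =
      Γ.step σ τ (history (Γ.play σ τ v) n) (Γ.play σ τ v n) := by
  rw [← fst_playAux]; rfl

theorem follows_play (hτ : Γ.ValidFor .two τ) (v : V) : Γ.Follows σ (Γ.play σ τ v) where
  move n hn := by rw [play_succ, step, if_pos hn]
  edge n hn := by rw [play_succ, step, if_neg hn]; exact hτ _ _ hn

theorem Follows.exists_play_eq (hω : Γ.Follows σ ω) (hΓ : Γ.NoDead) :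
    ∃ τ, Γ.ValidFor .two τ ∧ Γ.play σ τ (ω 0) = ω := by
  choose s hs using hΓ
  let τ : Strat V := fun h v => if Γ.E v (ω (h.length + 1)) then ω (h.length + 1) else s v
  refine ⟨τ, fun h v _ => ?_, ?_⟩
  · by_cases hE : Γ.E v (ω (h.length + 1))
    · simpa only [τ, if_pos hE] using hE
    · simpa only [τ, if_neg hE] using hs v
  · have hplay (n : ℕ) : Γ.playAux σ τ (ω 0) n = (history ω n, ω n) := by
      induction n with
      | zero => rfl
      | succ n ih =>
        simp only [playAux, ih, history_succ, Prod.mk.injEq, true_and, step]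
        split_ifs with hn
        · exact (hω.move n hn).symm
        · simp [τ, history, hω.edge n hn]
    exact funext fun n => congrArg Prod.snd (hplay n)

/-- A strategy can read the start vertex off the history, so it can imitate a different strategy
for each start vertex. -/
theorem NoDead.forall_wins_one_iff (hΓ : Γ.NoDead) {Ω : Set (ℕ → V)} :
    (∀ v, Γ.Wins .one Ω v) ↔
      ∃ σ, Γ.ValidFor .one σ ∧ ∀ ω, Γ.Follows σ ω → ω ∈ Ω := by
  refine ⟨fun h => ?_, fun ⟨σ, hσ, hΩ⟩ v =>
    ⟨σ, hσ, fun τ hτ => hΩ _ (follows_play hτ v)⟩⟩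
  choose σ hσ hΩ using h
  refine ⟨fun h v => σ (h.headD v) h v, fun h v hv => hσ _ h v hv, fun ω hω => ?_⟩
  have hω₀ : Γ.Follows (σ (ω 0)) ω :=
    ⟨fun n hn => by rw [hω.move n hn, headD_history], hω.edge⟩
  obtain ⟨τ, hτ, hplay⟩ := hω₀.exists_play_eq hΓ
  exact hplay ▸ hΩ (ω 0) τ hτ

theorem NoDead.exists_strategy_reach_or_mem (hΓ : Γ.NoDead) {U : Set V} {Ω : Set (ℕ → V)}
    (hΩ : ∀ v, (Γ.sub (Γ.attr .one U)ᶜ).Wins .one (subObj (Γ.attr .one U)ᶜ Ω) v) :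
    ∃ σ, Γ.ValidFor .one σ ∧ ∀ ω, Γ.Follows σ ω → (∃ n, ω n ∈ U) ∨ ω ∈ Ω := by
  obtain ⟨f, hf, hreach⟩ := hΓ.exists_attr_strategy .one U
  obtain ⟨ρ, hρ, hρΩ⟩ :=
    ((Γ.pClosed_compl_attr .one U).noDead_sub hΓ).forall_wins_one_iff.1 hΩ
  let σ : Strat V := fun h v =>
    if hv : v ∈ (Γ.attr .one U)ᶜ then
      ρ (h.filterMap (Function.partialInv Subtype.val)) ⟨v, hv⟩
    else f v
  refine ⟨σ, fun h v hv => ?_, fun ω hω => ?_⟩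
  · by_cases hvA : v ∈ (Γ.attr .one U)ᶜ
    · simp only [σ, dif_pos hvA]
      exact hρ _ ⟨v, hvA⟩ hv
    · simpa only [σ, dif_neg hvA] using hf v
  · by_cases hA : ∃ n, ω n ∈ Γ.attr .one U
    · refine .inl (hreach ω (fun n hn hnA => ?_) hω.edge hA)
      rw [hω.move n hn]
      exact dif_neg (not_not.2 hnA)
    · right
      lift ω to ℕ → ↥(Γ.attr .one U)ᶜ using not_exists.1 hA
      refine hρΩ ω ⟨fun n hn => Subtype.ext ?_, hω.edge⟩
      have hhist : (history (fun k => (ω k : V)) n).filterMap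
          (Function.partialInv Subtype.val) = history ω n := by
        rw [← filterMap_partialInv_map Subtype.val_injective (history ω n)]
        simp [history]
      rw [hω.move n hn]
      simp only [σ, dif_pos (ω n).2, hhist]

end GameGraph

end Plays

section Sequencing

variable {T : ℕ → Set V} {σ : ℕ → Strat V} {h h' : List V} {c K : ℕ} {ω : ℕ → V}

/-- The number of phases completed along a history and the part of the history lying in the current
phase, where phase `c` ends with the first visit to `T c` after its beginning. -/
noncomputable def phase (T : ℕ → Set V) (h : List V) : ℕ × List V :=
  h.foldl (fun s v => if v ∈ T s.1 then (s.1 + 1, []) else (s.1, s.2 ++ [v])) (0, [])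

/-- The strategy that uses `σ c` during phase `c`, restarted at the beginning of the phase. -/
noncomputable def sequentialStrat (T : ℕ → Set V) (σ : ℕ → Strat V) : Strat V :=
  fun h v => σ (phase T h).1 (phase T h).2 v

theorem phase_concat (T : ℕ → Set V) (h : List V) (v : V) :
    phase T (h ++ [v]) =
      if v ∈ T (phase T h).1 then ((phase T h).1 + 1, [])
      else ((phase T h).1, (phase T h).2 ++ [v]) := by
  rw [phase, List.foldl_append]
  rfl

theorem phase_append_of_forall_notMem (hc : phase T h = (c, []))
    (hT : ∀ v ∈ h', v ∉ T c) : phase T (h ++ h') = (c, h') := by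
  induction h' using List.reverseRecOn with
  | nil => rw [List.append_nil, hc]
  | append_singleton l v ih =>
    rw [← List.append_assoc, phase_concat, ih fun w hw => hT w (by simp [hw]),
      if_neg (hT v (by simp))]

theorem phase_history_add (hc : phase T (history ω K) = (c, [])) {n : ℕ}
    (hT : ∀ k < n, ω (K + k) ∉ T c) :
    phase T (history ω (K + n)) = (c, history (fun k => ω (K + k)) n) := by
  rw [history_add]
  exact phase_append_of_forall_notMem hc (by simpa [history] using hT)

theorem exists_phase_end (hc : phase T (history ω K) = (c, []))
    (hT : ∃ n, ω (K + n) ∈ T c) :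
    ∃ n ≥ K, ω n ∈ T c ∧ phase T (history ω (n + 1)) = (c + 1, []) := by
  have hphase := phase_history_add hc fun k hk => Nat.find_min hT hk
  refine ⟨K + Nat.find hT, Nat.le_add_right _ _, Nat.find_spec hT, ?_⟩
  rw [history_succ, phase_concat, hphase]
  exact if_pos (Nat.find_spec hT)

namespace GameGraph

variable {Γ : GameGraph V}

theorem validFor_sequentialStrat {p : Player} (hσ : ∀ c, Γ.ValidFor p (σ c)) :
    Γ.ValidFor p (sequentialStrat T σ) :=
  fun _ v hv => hσ _ _ v hv

theorem Follows.tail_of_phase (hω : Γ.Follows (sequentialStrat T σ) ω)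
    (hc : phase T (history ω K) = (c, [])) (hT : ∀ n, ω (K + n) ∉ T c) :
    Γ.Follows (σ c) fun n => ω (K + n) where
  move n hn := by
    rw [← Nat.add_assoc, hω.move (K + n) hn, sequentialStrat,
      phase_history_add hc fun k _ => hT k]
  edge n hn := hω.edge (K + n) hn

theorem Follows.visits_or_tail_mem {Ω : Set (ℕ → V)}
    (hσ : ∀ c ω, Γ.Follows (σ c) ω → (∃ n, ω n ∈ T c) ∨ ω ∈ Ω)
    (hω : Γ.Follows (sequentialStrat T σ) ω) :
    (∀ c, ∃ n ≥ c, ω n ∈ T c) ∨ ∃ K, (fun n => ω (K + n)) ∈ Ω := by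
  refine or_iff_not_imp_right.2 fun hΩ => ?_
  have hend {c K : ℕ} (hc : phase T (history ω K) = (c, [])) :
      ∃ n ≥ K, ω n ∈ T c ∧ phase T (history ω (n + 1)) = (c + 1, []) := by
    refine exists_phase_end hc (by_contra fun hT => ?_)
    have htail := hω.tail_of_phase hc (not_exists.1 hT)
    exact (hσ c _ htail).elim hT fun h => hΩ ⟨K, h⟩
  have hstart (c : ℕ) : ∃ K ≥ c, phase T (history ω K) = (c, []) := by
    induction c with
    | zero => exact ⟨0, le_rfl, rfl⟩
    | succ c ih =>
      obtain ⟨K, hcK, hK⟩ := ih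
      obtain ⟨n, hKn, _, hn⟩ := hend hK
      exact ⟨n + 1, Nat.succ_le_succ (hcK.trans hKn), hn⟩
  intro c
  obtain ⟨K, hcK, hK⟩ := hstart c
  obtain ⟨n, hKn, hn, _⟩ := hend hK
  exact ⟨n, hcK.trans hKn, hn⟩

end GameGraph

theorem exists_schedule (ι : Sort*) [Nonempty ι] [Countable ι] :
    ∃ s : ℕ → ι, ∀ i N, ∃ n ≥ N, s n = i := by
  obtain ⟨e, he⟩ := exists_surjective_nat ι
  refine ⟨fun n => e n.unpair.1, fun i N => ?_⟩
  obtain ⟨k, rfl⟩ := he i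
  exact ⟨Nat.pair k N, Nat.right_le_pair k N, by simp only [Nat.unpair_pair]⟩

end Sequencing

section InfOcc

variable {T : Set V} {ω : ℕ → V}

theorem infOcc_tail (ω : ℕ → V) (K : ℕ) : InfOcc (fun n => ω (K + n)) = InfOcc ω := by
  ext v
  refine ⟨fun h N => ?_, fun h N => ?_⟩
  · obtain ⟨n, hn, hv⟩ := h N
    exact ⟨K + n, by lia, hv⟩
  · obtain ⟨n, hn, hv⟩ := h (K + N)
    exact ⟨n - K, by lia, by simpa only [Nat.add_sub_of_le (show K ≤ n by lia)] using hv⟩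

theorem infOcc_inter_nonempty (hT : T.Finite) (hω : ∃ᶠ n in atTop, ω n ∈ T) :
    (InfOcc ω ∩ T).Nonempty := by
  by_contra hempty
  have hleave : ∀ v ∈ T, ∀ᶠ n in atTop, ω n ≠ v := by
    intro v hv
    by_contra hfreq
    exact hempty ⟨v, frequently_atTop.1 hfreq, hv⟩
  exact hω (((eventually_all_finite hT).2 hleave).mono fun n hn hnT => hn _ hnT rfl)

end InfOcc

theorem gr1_win_everywhere_general {ι₁ ι₂ : Sort*} [Countable ι₂] (Γ : GameGraph V)
    (hΓ : Γ.NoDead) (L : ι₁ → Set V) (U : ι₂ → Set V) (hU : ∀ ℓ, (U ℓ).Finite)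
    (hyp : ∀ ℓ v, (Γ.sub (Γ.attr .one (U ℓ))ᶜ).Wins .one
      (subObj (Γ.attr .one (U ℓ))ᶜ (DisjCoBuchiObj L)) v) :
    ∀ v, Γ.Wins .one (GR1Obj L U) v := by
  rw [hΓ.forall_wins_one_iff]
  cases isEmpty_or_nonempty ι₂
  · choose s hs using hΓ
    exact ⟨fun _ => s, fun _ v _ => hs v, fun _ _ _ => isEmptyElim⟩
  choose σ hσ hreach using fun ℓ => hΓ.exists_strategy_reach_or_mem (hyp ℓ)
  obtain ⟨s, hs⟩ := exists_schedule ι₂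
  refine ⟨sequentialStrat (fun c => U (s c)) fun c => σ (s c),
    GameGraph.validFor_sequentialStrat fun c => hσ (s c), fun ω hω hL ℓ => ?_⟩
  rcases hω.visits_or_tail_mem fun c => hreach (s c) with hvisit | ⟨K, t, ht⟩
  · refine infOcc_inter_nonempty (hU ℓ) (frequently_atTop.2 fun N => ?_)
    obtain ⟨c, hNc, rfl⟩ := hs ℓ N
    obtain ⟨n, hcn, hn⟩ := hvisit c
    exact ⟨n, hNc.trans hcn, hn⟩
  · rw [infOcc_tail] at ht
    exact absurd ht (hL t).ne_empty

/-- if for every `ℓ` all vertices of `V ∖ Attr₁(Γ, U ℓ)` are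
winning for player 1 in the induced subgame for the disjunctive co-Büchi
objective `⋁_t coBüchi(L t)`, then every vertex of `V` is winning for player 1
for the GR(1) objective. -/
theorem gr1_win_everywhere {V : Type u} [Finite V]
    (Γ : GameGraph V) (hΓ : Γ.NoDead) {k₁ k₂ : ℕ}
    (L : Fin k₁ → Set V) (U : Fin k₂ → Set V)
    (hyp : ∀ ℓ : Fin k₂, ∀ v : ↥((Γ.attr Player.one (U ℓ))ᶜ),
      (Γ.sub (Γ.attr Player.one (U ℓ))ᶜ).Wins Player.one
        (subObj (Γ.attr Player.one (U ℓ))ᶜ (DisjCoBuchiObj L)) v) :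
    ∀ v, Γ.Wins Player.one (GR1Obj L U) v :=
  gr1_win_everywhere_general Γ hΓ L U (fun ℓ => (U ℓ).toFinite) hyp
end

section
/- Let Γ = ((V,E),(V₁,V₂)) be a game graph with target sets T₁,…,T_k ⊆ V and parameter h with 1 ≤ h ≤ |V|, let (ρ_ℓ)_{1≤ℓ≤k} be the associated progress measure (the least fixed point of the update operator), and let W = {v ∈ V | ρ_ℓ(v) < ∞ for some ℓ}. Then for every index ℓ and every vertex v ∈ T_ℓ with ρ_ℓ(v) = 0, player 1 has a strategy to reach the set {v' ∈ T_{ℓ⊕1} | ρ_{ℓ⊕1}(v') = 0} from v, against any strategy of player 2, such that the play visits only vertices of W until that set is reached. -/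
open Classical

universe u

variable {V : Type u}

/-!
Let `r` be the `ℓ⊕1`-component of the progress measure. At a vertex of finite rank outside
`T (ℓ⊕1)` the fixed point equation makes the best successor strictly smaller in `r`, so if player 1
always moves to an `r`-minimal successor, the rank stays finite and decreases until the play enters
`T (ℓ⊕1)`. The first move, made from a vertex of `T ℓ` of finite rank, leads to a vertex with `r`
finite, because `incr` maps `∞` to `∞`. Finally, a target vertex of finite rank has rank `0`:
resetting all these ranks to `0` gives another fixed point, and the progress measure is the least
one.
-/

theorem exists_mem_and_forall_le_ne_top_of_descent {α : Type*} [PartialOrder α] [OrderTop α]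
    [WellFoundedLT α] {x : ℕ → α} {S : Set ℕ} (h0 : x 0 ≠ ⊤)
    (hx : ∀ n ∉ S, x n ≠ ⊤ → x (n + 1) < x n) : ∃ n ∈ S, ∀ m ≤ n, x m ≠ ⊤ := by
  have hfin : ∀ n, (∀ m < n, m ∉ S) → x n ≠ ⊤ := by
    intro n hn
    induction n with
    | zero => exact h0
    | succ n ih =>
      have hn_fin : x n ≠ ⊤ := ih fun m hm => hn m (hm.trans n.lt_succ_self)
      exact (hx n (hn n n.lt_succ_self) hn_fin).ne_top
  have hS : S.Nonempty := by
    by_contra hS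
    have hnotMem : ∀ n, n ∉ S := fun n hn => hS ⟨n, hn⟩
    exact not_strictAnti_of_wellFoundedLT x <| strictAnti_nat_of_succ_lt fun n =>
      hx n (hnotMem n) (hfin n fun m _ => hnotMem m)
  obtain ⟨n, hn, hmin⟩ := wellFounded_lt.has_min S hS
  exact ⟨n, hn, fun m hm => hfin m fun i hi hiS => hmin i hiS (hi.trans_le hm)⟩

namespace GameGraph

section BestSuccessor

variable {α : Type*} (Γ : GameGraph V)

/-- The value of `f` at the best successor of `v`, where player 1 minimizes and player 2 maximizes
`f`: the choice made in `GameGraph.best`, for a single function instead of a family. -/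
noncomputable def bestSucc [CompleteLattice α] (f : V → α) (v : V) : α :=
  if v ∈ Γ.P1 then ⨅ w ∈ {w | Γ.E v w}, f w else ⨆ w ∈ {w | Γ.E v w}, f w

theorem bestSucc_mono [CompleteLattice α] : Monotone (Γ.bestSucc (α := α)) := by
  intro f g hfg v
  unfold bestSucc
  split_ifs
  · exact iInf₂_mono fun w _ => hfg w
  · exact iSup₂_mono fun w _ => hfg w

variable [CompleteLinearOrder α] [WellFoundedLT α] {Γ}

theorem exists_memoryless_step_le_bestSucc (hΓ : Γ.NoDead) (f : V → α) :
    ∃ σ, Memoryless σ ∧ Γ.ValidFor Player.one σ ∧ ∀ τ, Γ.ValidFor Player.two τ →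
      ∀ hist v, f (Γ.step σ τ hist v) ≤ Γ.bestSucc f v := by
  choose next hnext using fun v => exists_minimalFor_of_wellFoundedLT (Γ.E v) f (hΓ v)
  refine ⟨fun _ => next, fun _ _ _ => rfl, fun _ v _ => (hnext v).prop, fun τ hτ hist v => ?_⟩
  unfold step bestSucc
  split_ifs with hv
  · exact le_iInf₂ fun w hw => not_lt.mp ((hnext v).not_lt hw)
  · exact le_biSup f (hτ hist v hv)

theorem exists_memoryless_reaches_of_bestSucc_lt (hΓ : Γ.NoDead) {f : V → α} {U : Set V}
    (hf : ∀ v ∉ U, f v ≠ ⊤ → Γ.bestSucc f v < f v) :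
    ∃ σ, Memoryless σ ∧ Γ.ValidFor Player.one σ ∧ ∀ τ, Γ.ValidFor Player.two τ →
      ∀ v, Γ.bestSucc f v ≠ ⊤ →
        ∃ n, Γ.play σ τ v (n + 1) ∈ U ∧ ∀ m ≤ n, f (Γ.play σ τ v (m + 1)) ≠ ⊤ := by
  obtain ⟨σ, hmem, hσ, hstep⟩ := exists_memoryless_step_le_bestSucc hΓ f
  refine ⟨σ, hmem, hσ, fun τ hτ v hv => ?_⟩
  have hplay : ∀ n, f (Γ.play σ τ v (n + 1)) ≤ Γ.bestSucc f (Γ.play σ τ v n) :=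
    fun n => hstep τ hτ (Γ.playAux σ τ v n).1 (Γ.play σ τ v n)
  exact exists_mem_and_forall_le_ne_top_of_descent (x := fun n => f (Γ.play σ τ v (n + 1)))
    (S := {n | Γ.play σ τ v (n + 1) ∈ U}) (ne_top_of_le_ne_top hv (hplay 0))
    fun n hn hfin => (hplay (n + 1)).trans_lt (hf _ hn hfin)

end BestSuccessor

end GameGraph

section Increment

variable {h k : ℕ} {T : Fin k → Set V} {ℓ : Fin k} {v : V} {x : ℕ∞}

theorem pmIncr_top : pmIncr h T ℓ v ⊤ = ⊤ := by
  simp [pmIncr]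

theorem pmIncr_of_mem (hv : v ∈ T ℓ) (hx : x ≠ ⊤) : pmIncr h T ℓ v x = 0 :=
  if_pos ⟨hv, hx⟩

theorem pmIncr_of_notMem (hv : v ∉ T ℓ) :
    pmIncr h T ℓ v x = if x < nbar h (T ℓ) then x + 1 else ⊤ :=
  if_neg fun hv' => hv hv'.1

theorem lt_pmIncr_of_notMem (hv : v ∉ T ℓ) (hx : x ≠ ⊤) : x < pmIncr h T ℓ v x := by
  rw [pmIncr_of_notMem hv]
  split_ifs
  · exact (ENat.lt_add_one_iff hx).mpr le_rfl
  · exact hx.lt_top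

theorem pmIncr_mono : Monotone (pmIncr h T ℓ v) := by
  intro x y hxy
  rcases eq_or_ne y ⊤ with rfl | hy
  · rw [pmIncr_top]
    exact le_top
  by_cases hv : v ∈ T ℓ
  · rw [pmIncr_of_mem hv (ne_top_of_le_ne_top hy hxy)]
    exact zero_le
  rw [pmIncr_of_notMem hv, pmIncr_of_notMem hv]
  by_cases hy_lt : y < nbar h (T ℓ)
  · rw [if_pos hy_lt, if_pos (hxy.trans_lt hy_lt)]
    gcongr
  · rw [if_neg hy_lt]
    exact le_top

end Increment

namespace GameGraph

variable {Γ : GameGraph V} {h k : ℕ} {T : Fin k → Set V} {ρ : Fin k → V → ℕ∞} {ℓ : Fin k} {v : V}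

theorem best_of_mem (hv : v ∈ T ℓ) : Γ.best T ρ ℓ v = Γ.bestSucc (ρ (finSucc ℓ)) v := by
  simp only [best, bestSucc, if_pos hv]

theorem best_of_notMem (hv : v ∉ T ℓ) : Γ.best T ρ ℓ v = Γ.bestSucc (ρ ℓ) v := by
  simp only [best, bestSucc, if_neg hv]

theorem best_mono : Monotone (Γ.best T) :=
  fun _ _ hρ _ v => Γ.bestSucc_mono (hρ _) v

theorem pmStep_eq_self_iff :
    Γ.pmStep h T ρ = ρ ↔ ∀ ℓ v, pmIncr h T ℓ v (Γ.best T ρ ℓ v) ≤ ρ ℓ v := by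
  simp only [funext_iff, pmStep, max_eq_left_iff]

theorem best_ne_top_of_pmStep_eq_self (hρ : Γ.pmStep h T ρ = ρ) (hv : ρ ℓ v ≠ ⊤) :
    Γ.best T ρ ℓ v ≠ ⊤ := by
  intro hbest
  have hincr := pmStep_eq_self_iff.mp hρ ℓ v
  rw [hbest, pmIncr_top] at hincr
  exact hv (top_le_iff.mp hincr)

theorem best_lt_of_pmStep_eq_self (hρ : Γ.pmStep h T ρ = ρ) (hvT : v ∉ T ℓ) (hv : ρ ℓ v ≠ ⊤) :
    Γ.best T ρ ℓ v < ρ ℓ v :=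
  (lt_pmIncr_of_notMem hvT (best_ne_top_of_pmStep_eq_self hρ hv)).trans_le
    (pmStep_eq_self_iff.mp hρ ℓ v)

/-- The rank functions `ρ` with every finite rank of a vertex of `T ℓ` at index `ℓ` replaced by
`0`; a fixed point below `ρ` to compare the least fixed point with. -/
noncomputable def resetOnTargets (T : Fin k → Set V) (ρ : Fin k → V → ℕ∞) : Fin k → V → ℕ∞ :=
  fun ℓ v => if v ∈ T ℓ ∧ ρ ℓ v ≠ ⊤ then 0 else ρ ℓ v

theorem resetOnTargets_le : resetOnTargets T ρ ≤ ρ := by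
  intro ℓ v
  unfold resetOnTargets
  split_ifs
  · exact zero_le
  · exact le_rfl

theorem pmStep_resetOnTargets (hρ : Γ.pmStep h T ρ = ρ) :
    Γ.pmStep h T (resetOnTargets T ρ) = resetOnTargets T ρ := by
  refine pmStep_eq_self_iff.mpr fun ℓ v => ?_
  have hbest : Γ.best T (resetOnTargets T ρ) ℓ v ≤ Γ.best T ρ ℓ v :=
    best_mono resetOnTargets_le ℓ v
  by_cases hv : v ∈ T ℓ ∧ ρ ℓ v ≠ ⊤
  · have hfin := ne_top_of_le_ne_top (best_ne_top_of_pmStep_eq_self hρ hv.2) hbest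
    rw [pmIncr_of_mem hv.1 hfin]
    exact zero_le
  · calc pmIncr h T ℓ v (Γ.best T (resetOnTargets T ρ) ℓ v)
        ≤ pmIncr h T ℓ v (Γ.best T ρ ℓ v) := pmIncr_mono hbest
      _ ≤ ρ ℓ v := pmStep_eq_self_iff.mp hρ ℓ v
      _ = resetOnTargets T ρ ℓ v := (if_neg hv).symm

theorem IsProgressMeasure.eq_zero_of_mem (hρ : Γ.IsProgressMeasure h T ρ) (hvT : v ∈ T ℓ)
    (hv : ρ ℓ v ≠ ⊤) : ρ ℓ v = 0 :=
  nonpos_iff_eq_zero.mp <| calc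
    ρ ℓ v ≤ resetOnTargets T ρ ℓ v := hρ.2 _ (pmStep_resetOnTargets hρ.1) ℓ v
    _ = 0 := if_pos ⟨hvT, hv⟩

end GameGraph

/-- For `k = 1` the start vertex already lies in the set to be reached; `0 < n` asks for a return
to it. If `(T ℓ)ᶜ` is infinite then `nbar h (T ℓ) = 0`, the junk value of `Set.ncard`; the argument
works for every value of the bound. -/
theorem progress_measure_reach_next_target_general (Γ : GameGraph V) (hΓ : Γ.NoDead) {k : ℕ}
    (T : Fin k → Set V) (h : ℕ) (ρ : Fin k → V → ℕ∞) (hρ : Γ.IsProgressMeasure h T ρ)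
    (ℓ : Fin k) :
    ∃ σ, Memoryless σ ∧ Γ.ValidFor Player.one σ ∧ ∀ τ, Γ.ValidFor Player.two τ →
      ∀ v ∈ T ℓ, ρ ℓ v = 0 →
        ∃ n, 0 < n ∧ Γ.play σ τ v n ∈ {v' | v' ∈ T (finSucc ℓ) ∧ ρ (finSucc ℓ) v' = 0} ∧
          ∀ m ≤ n, Γ.play σ τ v m ∈ {u | ∃ ℓ' : Fin k, ρ ℓ' u ≠ ⊤} := by
  have hdesc : ∀ u ∉ T (finSucc ℓ), ρ (finSucc ℓ) u ≠ ⊤ →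
      Γ.bestSucc (ρ (finSucc ℓ)) u < ρ (finSucc ℓ) u := fun u huT hu =>
    GameGraph.best_of_notMem huT ▸ GameGraph.best_lt_of_pmStep_eq_self hρ.1 huT hu
  obtain ⟨σ, hmem, hσ, hreach⟩ := GameGraph.exists_memoryless_reaches_of_bestSucc_lt hΓ hdesc
  refine ⟨σ, hmem, hσ, fun τ hτ v hvT h0 => ?_⟩
  have hv : ρ ℓ v ≠ ⊤ := h0 ▸ ENat.zero_ne_top
  have hbest : Γ.bestSucc (ρ (finSucc ℓ)) v ≠ ⊤ :=
    GameGraph.best_of_mem hvT ▸ GameGraph.best_ne_top_of_pmStep_eq_self hρ.1 hv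
  obtain ⟨n, hnT, hfin⟩ := hreach τ hτ v hbest
  refine ⟨n + 1, n.succ_pos, ⟨hnT, hρ.eq_zero_of_mem hnT (hfin n le_rfl)⟩, fun m hm => ?_⟩
  cases m with
  | zero => exact ⟨ℓ, hv⟩
  | succ m => exact ⟨finSucc ℓ, hfin m (Nat.succ_le_succ_iff.mp hm)⟩

/-- for the progress measure `ρ`, if `v ∈ T ℓ` and `ρ ℓ v = 0`,
then player 1 has a strategy to reach `{v' ∈ T (ℓ⊕1) | ρ (ℓ⊕1) v' = 0}` from
`v` against any player-2 strategy, visiting only vertices of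
`W = {u | ∃ ℓ', ρ ℓ' u < ∞}` until that set is reached. -/
theorem progress_measure_reach_next_target {V : Type u} [Finite V]
    (Γ : GameGraph V) (hΓ : Γ.NoDead) {k : ℕ} (T : Fin k → Set V)
    (h : ℕ) (hh1 : 1 ≤ h) (hh2 : h ≤ Nat.card V)
    (ρ : Fin k → V → ℕ∞) (hρ : Γ.IsProgressMeasure h T ρ)
    (ℓ : Fin k) (v : V) (hvT : v ∈ T ℓ) (h0 : ρ ℓ v = 0) :
    ∃ σ, Γ.ValidFor Player.one σ ∧ ∀ τ, Γ.ValidFor Player.two τ →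
      ∃ n, Γ.play σ τ v n ∈
          {v' | v' ∈ T (finSucc ℓ) ∧ ρ (finSucc ℓ) v' = 0} ∧
        ∀ m ≤ n, Γ.play σ τ v m ∈ {u | ∃ ℓ' : Fin k, ρ ℓ' u ≠ ⊤} := by
  obtain ⟨σ, -, hσ, hreach⟩ := progress_measure_reach_next_target_general Γ hΓ T h ρ hρ ℓ
  exact ⟨σ, hσ, fun τ hτ => (hreach τ hτ v hvT h0).imp fun _ hn => hn.2⟩
end

section
/- Let Γ = ((V,E),(V₁,V₂)) be a game graph with GR(1) objective given by target sets L₁,…,L_{k₁} and U₁,…,U_{k₂}, let {G_i} and {Z_i} be its hierarchical graph decomposition and exception sets, and for indices i ≥ 1 and 1 ≤ ℓ ≤ k₂ let Y_{i,ℓ} = Attr₁(Γ_i, U_ℓ ∪ Z_i). Suppose X ⊆ V ∖ Y_{i,ℓ} is nonempty and player 2 has, from every vertex of X, a strategy in the induced game graph Γ_i[V ∖ Y_{i,ℓ}] that guarantees, against any strategy of player 1, that the play stays in X and visits every set L_t ∖ Y_{i,ℓ} (1 ≤ t ≤ k₁) infinitely often. Then X is a player-2 dominion in the GR(1) game on Γ,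 and X ∩ U_ℓ = ∅. -/
open Classical

universe u

variable {V : Type u}

/-!
A player-1 vertex outside `Z_i` has out-degree at most `2^i`, so it keeps all its edges in `G_i`;
and no edge of `G_i` leads from a player-1 vertex outside the attractor `Y` into `Y`. Hence
in passing from `Γ` to `Γ_i[V ∖ Y]` player 1 loses no move and player 2 gains none, so a player-2
strategy in the subgame can be played on `Γ`, every play on `Γ` against it being a play of the
subgame. Such plays avoid `U ℓ ⊆ Y`, while visiting the finite set `X ∩ L t` infinitely often
forces some vertex of `L t` to recur.
-/

open Filter

variable {W : Type*}

section InfOcc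

variable {ω : ℕ → V} {v : V} {S : Set V}

theorem mem_infOcc_iff_frequently : v ∈ InfOcc ω ↔ ∃ᶠ n in atTop, ω n = v :=
  frequently_atTop.symm

theorem infOcc_subset (h : ∀ n, ω n ∈ S) : InfOcc ω ⊆ S := by
  intro v hv
  obtain ⟨n, -, rfl⟩ := hv 0
  exact h n

theorem infOcc_inter_nonempty_of_frequently (hS : S.Finite) (h : ∃ᶠ n in atTop, ω n ∈ S) :
    (InfOcc ω ∩ S).Nonempty := by
  obtain ⟨v, hvS, hv⟩ : ∃ v ∈ S, ∃ᶠ n in atTop, ω n = v :=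
    hS.frequently_exists.1 (h.mono fun n hn => ⟨ω n, hn, rfl⟩)
  exact ⟨v, mem_infOcc_iff_frequently.2 hv, hvS⟩

end InfOcc

namespace GameGraph

variable {Γ : GameGraph V} {Δ : GameGraph W} {p : Player}

section Attractor

variable {S : Set V} {v w : V}

theorem subset_attr : S ⊆ Γ.attr p S := fun _ => Attr.base

theorem notMem_attr_of_E (hv : v ∉ Γ.attr p S) (hvp : v ∈ Γ.verts p) (hvw : Γ.E v w) :
    w ∉ Γ.attr p S :=
  fun hw => hv (Attr.own hvp hvw hw)

end Attractor

section Step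

variable (σ τ : Strat V) (h : List V) {v : V}

theorem notMem_verts_iff_mem_opp : v ∉ Γ.verts p ↔ v ∈ Γ.verts p.opp := by
  cases p <;> simp [verts, Player.opp]

theorem step_sel_of_mem (hv : v ∈ Γ.verts p) :
    Γ.step (p.sel σ τ) (p.sel τ σ) h v = σ h v := by
  cases p
  · exact if_pos hv
  · exact if_neg hv

theorem step_sel_of_mem_opp (hv : v ∈ Γ.verts p.opp) :
    Γ.step (p.sel σ τ) (p.sel τ σ) h v = τ h v := by
  cases p
  · exact if_neg hv
  · exact if_pos hv

end Step

theorem NoDead.exists_validFor (hΓ : Γ.NoDead) (p : Player) : ∃ ρ, Γ.ValidFor p ρ := by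
  choose next hnext using hΓ
  exact ⟨fun _ => next, fun _ v _ => hnext v⟩

section Map

variable {f : W → V} {σ π : Strat W} {σ' π' : Strat V}

theorem playAux_map
    (hstep : ∀ h w, Γ.step σ' π' (h.map f) (f w) = f (Δ.step σ π h w)) (w : W) (n : ℕ) :
    Γ.playAux σ' π' (f w) n = Prod.map (List.map f) f (Δ.playAux σ π w n) := by
  induction n with
  | zero => rfl
  | succ n ih => simp [playAux, ih, hstep]

theorem play_map
    (hstep : ∀ h w, Γ.step σ' π' (h.map f) (f w) = f (Δ.step σ π h w)) (w : W) (n : ℕ) :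
    Γ.play σ' π' (f w) n = f (Δ.play σ π w n) :=
  congrArg Prod.snd (playAux_map hstep w n)

end Map

end GameGraph

namespace Strat

variable [Nonempty W] {f : W → V}

/-- The transport of a strategy `σ` on `W` along an injection `f : W → V`: it plays `σ` on the image
of `f` and the default strategy `ρ` elsewhere. History vertices outside the image of `f` are read
as an arbitrary vertex of `W`. -/
noncomputable def push (f : W → V) (σ : Strat W) (ρ : Strat V) : Strat V := fun h v =>
  if v ∈ Set.range f then f (σ (h.map (Function.invFun f)) (Function.invFun f v)) else ρ h v

/-- The strategy on `W` that imitates a strategy `τ` on `V` along an injection `f : W → V`; it is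
arbitrary where `τ` leaves the image of `f`. -/
noncomputable def pull (f : W → V) (τ : Strat V) : Strat W := fun h w =>
  Function.invFun f (τ (h.map f) (f w))

theorem push_apply (hf : f.Injective) (σ : Strat W) (ρ : Strat V) (h : List V) (w : W) :
    push f σ ρ h (f w) = f (σ (h.map (Function.invFun f)) w) := by
  rw [push, if_pos (Set.mem_range_self w), Function.leftInverse_invFun hf w]

theorem push_map_apply (hf : f.Injective) (σ : Strat W) (ρ : Strat V) (h : List W) (w : W) :
    push f σ ρ (h.map f) (f w) = f (σ h w) := by
  rw [push_apply hf, List.map_map, Function.invFun_comp hf, List.map_id]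

end Strat

namespace GameGraph

/-- An alternating embedding of `Δ` into `Γ` for player `p`: an injection of the vertices that
preserves their owners, along which `p` gains no move and the opponent of `p` loses none. This is
an alternating simulation given by an injective function, and is what makes strategies of
player `p` on `Δ` playable on `Γ`. -/
structure IsAlternatingEmbedding (Δ : GameGraph W) (Γ : GameGraph V) (p : Player) (f : W → V) :
    Prop where
  injective : f.Injective
  mem_P1_iff : ∀ w, f w ∈ Γ.P1 ↔ w ∈ Δ.P1
  map_own : ∀ ⦃a b⦄, a ∈ Δ.verts p → Δ.E a b → Γ.E (f a) (f b)
  lift_opp : ∀ ⦃a v⦄, a ∈ Δ.verts p.opp → Γ.E (f a) v → ∃ b, Δ.E a b ∧ f b = v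

namespace IsAlternatingEmbedding

variable {Γ : GameGraph V} {Δ : GameGraph W} {p : Player} {f : W → V}
  {σ : Strat W} {ρ τ : Strat V}

theorem mem_verts_iff (hf : Δ.IsAlternatingEmbedding Γ p f) (q : Player) (w : W) :
    f w ∈ Γ.verts q ↔ w ∈ Δ.verts q := by
  cases q
  · exact hf.mem_P1_iff w
  · exact (hf.mem_P1_iff w).not

section Strategies

variable [Nonempty W]

theorem validFor_push (hf : Δ.IsAlternatingEmbedding Γ p f) (hσ : Δ.ValidFor p σ)
    (hρ : Γ.ValidFor p ρ) : Γ.ValidFor p (σ.push f ρ) := by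
  intro h v hv
  by_cases hvf : v ∈ Set.range f
  · obtain ⟨w, rfl⟩ := hvf
    have hw : w ∈ Δ.verts p := (hf.mem_verts_iff p w).1 hv
    rw [Strat.push_apply hf.injective]
    exact hf.map_own hw (hσ _ w hw)
  · rw [Strat.push, if_neg hvf]
    exact hρ h v hv

theorem pull_spec (hf : Δ.IsAlternatingEmbedding Γ p f) (hτ : Γ.ValidFor p.opp τ)
    (h : List W) {w : W} (hw : w ∈ Δ.verts p.opp) :
    Δ.E w (τ.pull f h w) ∧ f (τ.pull f h w) = τ (h.map f) (f w) := by
  obtain ⟨b, hwb, hb⟩ := hf.lift_opp hw (hτ (h.map f) (f w) ((hf.mem_verts_iff _ w).2 hw))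
  have hpull : τ.pull f h w = b := by
    rw [Strat.pull, ← hb, Function.leftInverse_invFun hf.injective]
  exact hpull ▸ ⟨hwb, hb⟩

theorem validFor_pull (hf : Δ.IsAlternatingEmbedding Γ p f) (hτ : Γ.ValidFor p.opp τ) :
    Δ.ValidFor p.opp (τ.pull f) :=
  fun h _ hw => (hf.pull_spec hτ h hw).1

theorem winPlay_push (hf : Δ.IsAlternatingEmbedding Γ p f) (hτ : Γ.ValidFor p.opp τ)
    (w : W) (n : ℕ) :
    Γ.winPlay p (σ.push f ρ) τ (f w) n = f (Δ.winPlay p σ (τ.pull f) w n) := by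
  refine play_map (fun h w => ?_) w n
  by_cases hw : w ∈ Δ.verts p
  · rw [step_sel_of_mem _ _ _ hw, step_sel_of_mem _ _ _ ((hf.mem_verts_iff p w).2 hw),
      Strat.push_map_apply hf.injective]
  · rw [notMem_verts_iff_mem_opp] at hw
    rw [step_sel_of_mem_opp _ _ _ hw, step_sel_of_mem_opp _ _ _ ((hf.mem_verts_iff _ w).2 hw),
      (hf.pull_spec hτ h hw).2]

end Strategies

theorem forcesStayBuchi (hf : Δ.IsAlternatingEmbedding Γ p f) (hρ : Γ.ValidFor p ρ)
    {D : Set V} {ι : Sort*} {T : ι → Set V} {w : W}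
    (h : Δ.ForcesStayBuchi p (f ⁻¹' D) (fun i => f ⁻¹' T i) w) :
    Γ.ForcesStayBuchi p D T (f w) := by
  have : Nonempty W := ⟨w⟩
  obtain ⟨σ, hσ, hwin⟩ := h
  refine ⟨σ.push f ρ, hf.validFor_push hσ hρ, fun τ hτ => ?_⟩
  simp only [hf.winPlay_push hτ]
  exact hwin (τ.pull f) (hf.validFor_pull hτ)

end IsAlternatingEmbedding

variable {Γ : GameGraph V}

theorem ForcesStayBuchi.mono_target {p : Player} {D : Set V} {ι : Sort*} {T T' : ι → Set V} {v : V}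
    (h : Γ.ForcesStayBuchi p D T v) (hT : ∀ i, T i ⊆ T' i) : Γ.ForcesStayBuchi p D T' v := by
  obtain ⟨σ, hσ, hwin⟩ := h
  refine ⟨σ, hσ, fun τ hτ => ⟨(hwin τ hτ).1, fun i n => ?_⟩⟩
  obtain ⟨m, hnm, hm⟩ := (hwin τ hτ).2 i n
  exact ⟨m, hnm, hT i hm⟩

section GR1

variable {ι₁ ι₂ : Sort*} {L : ι₁ → Set V} {U : ι₂ → Set V} {X : Set V} {ℓ : ι₂}

theorem notMem_GR1Obj {ω : ℕ → V} (hfin : ∀ t, (X ∩ L t).Finite) (hXU : X ∩ U ℓ = ∅)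
    (hX : ∀ n, ω n ∈ X) (hL : ∀ t n, ∃ m, n ≤ m ∧ ω m ∈ L t) : ω ∉ GR1Obj L U := by
  intro hω
  have hassume : ∀ t, (InfOcc ω ∩ L t).Nonempty := fun t =>
    (infOcc_inter_nonempty_of_frequently (hfin t)
      ((frequently_atTop.2 (hL t)).mono fun n hn => ⟨hX n, hn⟩)).mono
      (Set.inter_subset_inter_right _ Set.inter_subset_right)
  have hguarantee : (X ∩ U ℓ).Nonempty :=
    (hω hassume ℓ).mono (Set.inter_subset_inter_left _ (infOcc_subset hX))
  exact hguarantee.ne_empty hXU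

theorem dominion_two_GR1Obj (hX : X.Nonempty) (hfin : ∀ t, (X ∩ L t).Finite) (hXU : X ∩ U ℓ = ∅)
    (hforce : ∀ v ∈ X, Γ.ForcesStayBuchi .two X L v) : Γ.Dominion .two (GR1Obj L U) X := by
  refine ⟨hX, fun v hv => ?_⟩
  obtain ⟨σ, hσ, hwin⟩ := hforce v hv
  refine ⟨σ, hσ, fun τ hτ => ?_⟩
  obtain ⟨hstay, hrecur⟩ := hwin τ hτ
  exact ⟨notMem_GR1Obj hfin hXU hstay hrecur, hstay⟩

end GR1

end GameGraph

namespace HierDecomp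

open GameGraph

variable {Γ : GameGraph V} (H : HierDecomp Γ) {i : ℕ}

theorem graph_E_of_notMem_Z {v w : V} (hv : v ∈ Γ.P1) (hvZ : v ∉ H.Z i) (hvw : Γ.E v w) :
    (H.graph i).E v w :=
  ⟨hvw, Or.inl (not_lt.1 fun hdeg => hvZ (Or.inr ⟨hv, hdeg⟩))⟩

theorem isAlternatingEmbedding_compl_attr {S : Set V} (hS : H.Z i ⊆ S) :
    ((H.graph i).sub ((H.graph i).attr .one S)ᶜ).IsAlternatingEmbedding Γ .two Subtype.val where
  injective := Subtype.val_injective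
  mem_P1_iff _ := Iff.rfl
  map_own _ _ _ hE := hE.1
  lift_opp a w ha hE :=
    have hE' : (H.graph i).E a w :=
      H.graph_E_of_notMem_Z ha (fun haZ => a.2 (subset_attr (hS haZ))) hE
    ⟨⟨w, notMem_attr_of_E a.2 ha hE'⟩, hE', rfl⟩

end HierDecomp

/-- At a vertex with infinitely many successors `outDeg` has the junk value `0`, so that `G_i` keeps
all outgoing edges there. -/
theorem hier_gr1_dominion_sound_general (Γ : GameGraph V) (hΓ : Γ.NoDead) (H : HierDecomp Γ)
    {ι₁ ι₂ : Sort*} (L : ι₁ → Set V) (U : ι₂ → Set V) (i : ℕ) (ℓ : ι₂) (Y : Set V)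
    (hY : Y = (H.graph i).attr Player.one (U ℓ ∪ H.Z i))
    (X : Set V) (hXsub : X ⊆ Yᶜ) (hXne : X.Nonempty) (hfin : ∀ t, (X ∩ L t).Finite)
    (hforce : ∀ v : ↥Yᶜ, (v : V) ∈ X →
      ((H.graph i).sub Yᶜ).ForcesStayBuchi Player.two
        {x : ↥Yᶜ | (x : V) ∈ X} (fun t : ι₁ => {x : ↥Yᶜ | (x : V) ∈ L t \ Y}) v) :
    Γ.Dominion Player.two (GR1Obj L U) X ∧ X ∩ U ℓ = ∅ := by
  subst hY
  have hXU : X ∩ U ℓ = ∅ := Set.disjoint_iff_inter_eq_empty.1 <|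
    Set.disjoint_left.2 fun v hvX hvU => hXsub hvX (GameGraph.subset_attr (Or.inl hvU))
  obtain ⟨ρ, hρ⟩ := hΓ.exists_validFor Player.two
  have hforceΓ : ∀ v ∈ X, Γ.ForcesStayBuchi Player.two X L v := fun v hv =>
    ((H.isAlternatingEmbedding_compl_attr Set.subset_union_right).forcesStayBuchi hρ
      (hforce ⟨v, hXsub hv⟩ hv)).mono_target fun _ => Set.sdiff_subset
  exact ⟨GameGraph.dominion_two_GR1Obj hXne hfin hXU hforceΓ, hXU⟩

/-- with `Y = Attr₁(Γ_i, U ℓ ∪ Z_i)`, if from every vertex of a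
nonempty set `X ⊆ V ∖ Y` player 2 can force, in the induced subgame
`Γ_i[V ∖ Y]`, that the play stays in `X` and visits every `L t ∖ Y` infinitely
often, then `X` is a player-2 dominion in the GR(1) game on `Γ` and
`X ∩ U ℓ = ∅`. -/
theorem hier_gr1_dominion_sound {V : Type u} [Finite V]
    (Γ : GameGraph V) (hΓ : Γ.NoDead) (H : HierDecomp Γ)
    {k₁ k₂ : ℕ} (L : Fin k₁ → Set V) (U : Fin k₂ → Set V)
    (i : ℕ) (hi : 1 ≤ i) (ℓ : Fin k₂) (Y : Set V)
    (hY : Y = (H.graph i).attr Player.one (U ℓ ∪ H.Z i))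
    (X : Set V) (hXsub : X ⊆ Yᶜ) (hXne : X.Nonempty)
    (hforce : ∀ v : ↥Yᶜ, (v : V) ∈ X →
      ((H.graph i).sub Yᶜ).ForcesStayBuchi Player.two
        {x : ↥Yᶜ | (x : V) ∈ X}
        (fun t : Fin k₁ => {x : ↥Yᶜ | (x : V) ∈ L t \ Y}) v) :
    Γ.Dominion Player.two (GR1Obj L U) X ∧ X ∩ U ℓ = ∅ := by
  exact hier_gr1_dominion_sound_general Γ hΓ H L U i ℓ Y hY X hXsub hXne
    (fun _ => Set.toFinite _) hforce
end
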